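/- There exist constants c₀ ∈ (0,1) and C, depending only on m and n, such that the following holds. Let 0 < δ ≤ 1, let x ∈ ℝⁿ, and let Q₁, Q₂ be polynomials of degree at most m−1 satisfying |∂^β Q_i(x)| ≤ δ^{−|β|} for all |β| ≤ m−1 and i = 1, 2, Q₁ ⊙_x Q₁ + Q₂ ⊙_x Q₂ = 1, and Q₁(x) ≥ 1/√2. Then there exist functions θ₁, θ₂ ∈ C^m(ℝⁿ) such that: |∂^β θ_i| ≤ Cδ^{−|β|} on ℝⁿ for |β| ≤ m and i = 1, 2; θ₁² + θ₂² = 1 on ℝⁿ; J_x(θ_i) = Q_i for i = 1, 2; and outside the open ball B(x, c₀δ) one has θ₁ = 1 and θ₂ = 0. -/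

import Mathlib

open scoped BigOperators

noncomputable section

abbrev Euc (n : ℕ) : Type := EuclideanSpace ℝ (Fin n)
abbrev MPoly (n : ℕ) : Type := MvPolynomial (Fin n) ℝ

/-- Partial derivative in the `i`-th coordinate direction. -/
noncomputable def pD {n : ℕ} (i : Fin n) (F : Euc n → ℝ) : Euc n → ℝ :=
  fun x => fderiv ℝ F x (EuclideanSpace.single i (1 : ℝ))

/-- The multi-index partial derivative `∂^α F`. -/
noncomputable def mD {n : ℕ} (α : Fin n → ℕ) (F : Euc n → ℝ) : Euc n → ℝ :=
  (((List.finRange n).flatMap fun i => List.replicate (α i) i)).foldr pD F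

/-- Partial derivative within a set. -/
noncomputable def pDW {n : ℕ} (s : Set (Euc n)) (i : Fin n) (F : Euc n → ℝ) : Euc n → ℝ :=
  fun x => fderivWithin ℝ F s x (EuclideanSpace.single i (1 : ℝ))

/-- Multi-index partial derivative within a set. -/
noncomputable def mDW {n : ℕ} (s : Set (Euc n)) (α : Fin n → ℕ) (F : Euc n → ℝ) : Euc n → ℝ :=
  (((List.finRange n).flatMap fun i => List.replicate (α i) i)).foldr (pDW s) F

/-- The order `|α|` of a multi-index. -/
def deg {n : ℕ} (α : Fin n → ℕ) : ℕ := ∑ i, α i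

/-- Evaluation of an `n`-variable polynomial at a point of `ℝⁿ`. -/
noncomputable def peval {n : ℕ} (P : MPoly n) (x : Euc n) : ℝ :=
  MvPolynomial.eval (fun i => x i) P

/-- `F ∈ C^m(ℝⁿ)` with `‖F‖_{C^m(ℝⁿ)} ≤ M`. -/
def CmNormLe (m n : ℕ) (F : Euc n → ℝ) (M : ℝ) : Prop :=
  ContDiff ℝ (m : ℕ∞) F ∧ ∀ α : Fin n → ℕ, deg α ≤ m → ∀ x : Euc n, |mD α F x| ≤ M

/-- `F ∈ C^{m-1,1}(ℝⁿ)` with `‖F‖_{C^{m-1,1}(ℝⁿ)} ≤ M`. -/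
def CmLipNormLe (m n : ℕ) (F : Euc n → ℝ) (M : ℝ) : Prop :=
  ContDiff ℝ ((m - 1 : ℕ) : ℕ∞) F ∧
  (∀ α : Fin n → ℕ, deg α ≤ m - 1 → ∀ x : Euc n, |mD α F x| ≤ M) ∧
  (∀ α : Fin n → ℕ, deg α = m - 1 → ∀ i : Fin n, ∀ x : Euc n, ∀ t : ℝ,
    |mD α F (x + t • EuclideanSpace.single i (1 : ℝ)) - mD α F x| ≤ M * |t|)

/-- `J_x(F) = P`, i.e. `P` is the `(m-1)`-st order Taylor polynomial of `F` at `x`. -/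
def IsJetAt (m n : ℕ) (F : Euc n → ℝ) (x : Euc n) (P : MPoly n) : Prop :=
  P.totalDegree ≤ m - 1 ∧
  ∀ α : Fin n → ℕ, deg α ≤ m - 1 → mD α (peval P) x = mD α F x

/-- `J_x^+(F) = P`, i.e. `P` is the `m`-th order Taylor polynomial of `F` at `x`. -/
def IsJetPlusAt (m n : ℕ) (F : Euc n → ℝ) (x : Euc n) (P : MPoly n) : Prop :=
  P.totalDegree ≤ m ∧
  ∀ α : Fin n → ℕ, deg α ≤ m → mD α (peval P) x = mD α F x

/-- Truncation of a polynomial: keep the monomials of total degree `≤ d`. -/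
noncomputable def truncLE {n : ℕ} (d : ℕ) (P : MPoly n) : MPoly n :=
  ∑ s ∈ P.support.filter (fun s => (s.sum fun _ e => e) ≤ d),
    MvPolynomial.monomial s (P.coeff s)

/-- Substitution `y ↦ y + v` in a polynomial. -/
noncomputable def polyShift {n : ℕ} (v : Fin n → ℝ) (P : MPoly n) : MPoly n :=
  MvPolynomial.aeval (fun i => (MvPolynomial.X i + MvPolynomial.C (v i) : MPoly n)) P

/-- The `(m-1)`-st order Taylor polynomial of a polynomial `P` at `x`. -/
noncomputable def jetTrunc (m n : ℕ) (x : Euc n) (P : MPoly n) : MPoly n :=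
  polyShift (fun i => -(x i)) (truncLE (m - 1) (polyShift (fun i => x i) P))

/-- Multiplication of `(m-1)`-jets at `x`: `P ⊙_x Q = J_x(PQ)`. -/
noncomputable def jmul (m n : ℕ) (x : Euc n) (P Q : MPoly n) : MPoly n :=
  jetTrunc m n x (P * Q)

/-- `Γ*(x,M)`. -/
def GammaStar (m n : ℕ) (x : Euc n) (M : ℝ) : Set (MPoly n) :=
  {P | ∃ F : Euc n → ℝ, CmNormLe m n F M ∧ (∀ y, 0 ≤ F y) ∧ IsJetAt m n F x P}

/-- `Γ_f(x,M)`. -/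
def GammaF (m n : ℕ) (f : Euc n → ℝ) (x : Euc n) (M : ℝ) : Set (MPoly n) :=
  {P ∈ GammaStar m n x M | peval P x = f x}

/-- `Γ'*(x,M)` (the `C^{m-1,1}` version). -/
def GammaStar' (m n : ℕ) (x : Euc n) (M : ℝ) : Set (MPoly n) :=
  {P | ∃ F : Euc n → ℝ, CmLipNormLe m n F M ∧ (∀ y, 0 ≤ F y) ∧ IsJetAt m n F x P}

/-- `Γ'_f(x,M)`. -/
def GammaF' (m n : ℕ) (f : Euc n → ℝ) (x : Euc n) (M : ℝ) : Set (MPoly n) :=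
  {P ∈ GammaStar' m n x M | peval P x = f x}

/-- `Γ₀⁺`. -/
def Gamma0plus (m n : ℕ) : Set (MPoly n) :=
  {P | P.totalDegree ≤ m ∧
    (∀ β : Fin n → ℕ, deg β ≤ m → |mD β (peval P) 0| ≤ 1) ∧
    (∀ x : Euc n, 0 ≤ peval P x + ‖x‖ ^ m) ∧
    (∀ ε : ℝ, 0 < ε → ∃ δ : ℝ, 0 < δ ∧ ∀ x : Euc n, ‖x‖ ≤ δ → 0 ≤ peval P x + ε * ‖x‖ ^ m)}

/-- `Γ̃₀'`. -/
def GammaTilde0' (m n : ℕ) : Set (MPoly n) :=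
  {P | P.totalDegree ≤ m - 1 ∧
    (∀ β : Fin n → ℕ, deg β ≤ m - 1 → |mD β (peval P) 0| ≤ 1) ∧
    ∀ x : Euc n, 0 ≤ peval P x + ‖x‖ ^ m}

/-- The closed axis-parallel cube with center `c` and sidelength `δ`. -/
def cube {n : ℕ} (c : Euc n) (δ : ℝ) : Set (Euc n) :=
  {y | ∀ i, |y i - c i| ≤ δ / 2}

/-- `F ∈ C^{m-1,1}(Q)` with `‖F‖_{C^{m-1,1}(Q)} ≤ M`, for the cube `Q` of center `c`,
sidelength `δ`. -/
def CmLipOnCubeLe (m n : ℕ) (c : Euc n) (δ : ℝ) (F : Euc n → ℝ) (M : ℝ) : Prop :=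
  ContDiffOn ℝ ((m - 1 : ℕ) : ℕ∞) F (cube c δ) ∧
  (∀ α : Fin n → ℕ, deg α ≤ m - 1 → ∀ x ∈ cube c δ, |mDW (cube c δ) α F x| ≤ M) ∧
  (∀ α : Fin n → ℕ, deg α = m - 1 → ∀ i : Fin n, ∀ x ∈ cube c δ, ∀ t : ℝ,
    x + t • EuclideanSpace.single i (1 : ℝ) ∈ cube c δ →
    |mDW (cube c δ) α F (x + t • EuclideanSpace.single i (1 : ℝ)) - mDW (cube c δ) α F x|
      ≤ M * |t|)

/-!
After rescaling to `δ = 1` and `x = 0`, the polynomial `Q₂` has bounded coefficients and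
`|Q₂(0)| ≤ 1/√2`, so on a small ball of fixed radius it stays bounded away from `1`. Let `θ₂` be
`Q₂` times a cutoff supported in that ball, and `θ₁ = √(1 - θ₂²)`; all bounds then follow from
compactness. Near `x`, `(θ₁ - Q₁)(θ₁ + Q₁) = 1 - Q₁² - Q₂²` vanishes to order `m` at `x`, while
`θ₁ + Q₁` does not vanish there, so `θ₁` has jet `Q₁`.
-/

section

open Filter Finset
open scoped ContDiff Topology

section VanishingOrder

variable {𝕜 E : Type*} [NontriviallyNormedField 𝕜] [NormedAddCommGroup E] [NormedSpace 𝕜 E]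
  {F G : E → 𝕜} {x : E} {j k : ℕ}

/-- `F` is smooth at `x` and all its derivatives of order less than `k` vanish there: its germ lies
in the `k`-th power of the maximal ideal at `x`. -/
structure VanishesToOrder (k : ℕ) (F : E → 𝕜) (x : E) : Prop where
  contDiffAt : ContDiffAt 𝕜 ∞ F x
  iteratedFDeriv_eq_zero : ∀ j < k, iteratedFDeriv 𝕜 j F x = 0

namespace VanishesToOrder

lemma apply_eq_zero (hF : VanishesToOrder k F x) (hk : 0 < k) : F x = 0 := by
  rw [← iteratedFDeriv_zero_apply (𝕜 := 𝕜) (f := F) (x := x) 0, hF.iteratedFDeriv_eq_zero 0 hk]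
  rfl

lemma mono (hF : VanishesToOrder k F x) (hjk : j ≤ k) : VanishesToOrder j F x :=
  ⟨hF.contDiffAt, fun i hi ↦ hF.iteratedFDeriv_eq_zero i (hi.trans_le hjk)⟩

lemma congr (hF : VanishesToOrder k F x) (hFG : F =ᶠ[𝓝 x] G) : VanishesToOrder k G x :=
  ⟨hF.contDiffAt.congr_of_eventuallyEq hFG.symm, fun i hi ↦
    (hFG.iteratedFDeriv 𝕜 i).eq_of_nhds.symm.trans (hF.iteratedFDeriv_eq_zero i hi)⟩

protected lemma zero : VanishesToOrder k (fun _ : E ↦ (0 : 𝕜)) x :=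
  ⟨contDiffAt_const, fun _ _ ↦ congr_fun iteratedFDeriv_fun_zero x⟩

lemma of_contDiffAt (hF : ContDiffAt 𝕜 ∞ F x) : VanishesToOrder 0 F x :=
  ⟨hF, fun _ hi ↦ absurd hi (Nat.not_lt_zero _)⟩

lemma of_apply_eq_zero (hF : ContDiffAt 𝕜 ∞ F x) (hFx : F x = 0) : VanishesToOrder 1 F x := by
  refine ⟨hF, fun i hi ↦ ?_⟩
  obtain rfl : i = 0 := by omega
  ext v
  simpa using hFx

lemma add (hF : VanishesToOrder k F x) (hG : VanishesToOrder k G x) :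
    VanishesToOrder k (fun y ↦ F y + G y) x := by
  refine ⟨hF.contDiffAt.add hG.contDiffAt, fun i hi ↦ ?_⟩
  have hi' : (i : ℕ∞ω) ≤ ∞ := mod_cast le_top
  rw [fun_iteratedFDeriv_add_apply (hF.contDiffAt.of_le hi') (hG.contDiffAt.of_le hi'),
    hF.iteratedFDeriv_eq_zero i hi, hG.iteratedFDeriv_eq_zero i hi, add_zero]

lemma sum {ι : Type*} {s : Finset ι} {F : ι → E → 𝕜}
    (hF : ∀ i ∈ s, VanishesToOrder k (F i) x) :
    VanishesToOrder k (fun y ↦ ∑ i ∈ s, F i y) x := by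
  refine ⟨ContDiffAt.sum fun i hi ↦ (hF i hi).contDiffAt, fun j hj ↦ ?_⟩
  rw [iteratedFDeriv_fun_sum_apply fun i hi ↦ (hF i hi).contDiffAt.of_le (mod_cast le_top)]
  exact sum_eq_zero fun i hi ↦ (hF i hi).iteratedFDeriv_eq_zero j hj

end VanishesToOrder

lemma norm_iteratedFDeriv_mul_le_of_contDiffAt (hF : ContDiffAt 𝕜 k F x)
    (hG : ContDiffAt 𝕜 k G x) :
    ‖iteratedFDeriv 𝕜 k (fun y ↦ F y * G y) x‖ ≤ ∑ i ∈ range (k + 1),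
      (k.choose i : ℝ) * ‖iteratedFDeriv 𝕜 i F x‖ * ‖iteratedFDeriv 𝕜 (k - i) G x‖ := by
  obtain ⟨U, hU, hxU, hFU, hGU⟩ : ∃ U : Set E, IsOpen U ∧ x ∈ U ∧
      ContDiffOn 𝕜 k F U ∧ ContDiffOn 𝕜 k G U := by
    have hsmooth : ∀ᶠ y in 𝓝 x, ContDiffAt 𝕜 k F y ∧ ContDiffAt 𝕜 k G y :=
      (hF.eventually (by simp)).and (hG.eventually (by simp))
    obtain ⟨U, hUsub, hU, hxU⟩ := eventually_nhds_iff.1 hsmooth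
    exact ⟨U, hU, hxU, fun y hy ↦ (hUsub y hy).1.contDiffWithinAt,
      fun y hy ↦ (hUsub y hy).2.contDiffWithinAt⟩
  have hmul := norm_iteratedFDerivWithin_mul_le hFU hGU hU.uniqueDiffOn hxU le_rfl
  simpa only [iteratedFDerivWithin_of_isOpen _ hU hxU] using hmul

namespace VanishesToOrder

-- Each term of the Leibniz formula below order `j + k` has a factor that vanishes at `x`.
lemma mul (hF : VanishesToOrder j F x) (hG : VanishesToOrder k G x) :
    VanishesToOrder (j + k) (fun y ↦ F y * G y) x := by
  refine ⟨hF.contDiffAt.mul hG.contDiffAt, fun i hi ↦ norm_le_zero_iff.1 ?_⟩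
  have hi' : (i : ℕ∞ω) ≤ ∞ := mod_cast le_top
  refine (norm_iteratedFDeriv_mul_le_of_contDiffAt (hF.contDiffAt.of_le hi')
    (hG.contDiffAt.of_le hi')).trans_eq (sum_eq_zero fun l hl ↦ ?_)
  obtain hlj | hlk : l < j ∨ i - l < k := by grind
  · simp [hF.iteratedFDeriv_eq_zero l hlj]
  · simp [hG.iteratedFDeriv_eq_zero (i - l) hlk]

lemma prod {ι : Type*} {s : Finset ι} {k : ι → ℕ} {F : ι → E → 𝕜}
    (hF : ∀ i ∈ s, VanishesToOrder (k i) (F i) x) :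
    VanishesToOrder (∑ i ∈ s, k i) (fun y ↦ ∏ i ∈ s, F i y) x := by
  induction s using Finset.cons_induction with
  | empty => simpa using of_contDiffAt contDiffAt_const
  | cons i s hi ih =>
    simp only [sum_cons, prod_cons]
    rw [forall_mem_cons] at hF
    exact hF.1.mul (ih hF.2)

lemma pow (hF : VanishesToOrder k F x) (l : ℕ) :
    VanishesToOrder (l * k) (fun y ↦ F y ^ l) x := by
  simpa using prod (s := range l) fun _ _ ↦ hF

end VanishesToOrder

end VanishingOrder

lemma VanishesToOrder.sqrt_one_sub_sq_sub {E : Type*} [NormedAddCommGroup E] [NormedSpace ℝ E]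
    {F G : E → ℝ} {x : E} {k : ℕ} (hFG : VanishesToOrder k (fun y ↦ F y ^ 2 + G y ^ 2 - 1) x)
    (hF : ContDiffAt ℝ ∞ F x) (hG : ContDiffAt ℝ ∞ G x) (hFx : 0 < F x) (hGx : |G x| < 1) :
    VanishesToOrder k (fun y ↦ √(1 - G y ^ 2) - F y) x := by
  have hpos : 0 < 1 - G x ^ 2 := sub_pos.2 ((sq_lt_one_iff_abs_lt_one _).2 hGx)
  have hsqrt : ContDiffAt ℝ ∞ (fun y ↦ √(1 - G y ^ 2)) x :=
    (contDiffAt_const.sub (hG.pow 2)).sqrt hpos.ne'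
  have hinv : ContDiffAt ℝ ∞ (fun y ↦ -(√(1 - G y ^ 2) + F y)⁻¹) x :=
    ((hsqrt.add hF).inv (by positivity)).neg
  refine (hFG.mul (.of_contDiffAt hinv)).congr ?_
  have hcont : ContinuousAt (fun y ↦ 1 - G y ^ 2) x :=
    continuousAt_const.sub (hG.continuousAt.pow 2)
  filter_upwards [hF.continuousAt.eventually_const_lt hFx, hcont.eventually_const_lt hpos]
    with y hFy hGy
  have hsum : √(1 - G y ^ 2) + F y ≠ 0 := by positivity
  rw [mul_neg, ← div_eq_mul_inv, ← neg_div, div_eq_iff hsum]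
  linear_combination -Real.sq_sqrt hGy.le

section CompactBounds

variable {E F G : Type*} [NormedAddCommGroup E] [NormedSpace ℝ E]
  [NormedAddCommGroup F] [NormedSpace ℝ F] [NormedAddCommGroup G] [NormedSpace ℝ G]

lemma exists_forall_le_of_forall_exists_le {α : Type*} {f : ℕ → α → ℝ}
    (hf : ∀ k, ∃ B, ∀ y, f k y ≤ B) (N : ℕ) : ∃ B, ∀ k ≤ N, ∀ y, f k y ≤ B := by
  choose B hB using hf
  obtain ⟨M, hM⟩ := ((range (N + 1)).image B).exists_le
  exact ⟨M, fun k hk y ↦ (hB k y).trans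
    (hM _ (mem_image_of_mem B (mem_range_succ_iff.2 hk)))⟩

lemma exists_norm_iteratedFDeriv_le_of_hasCompactSupport {f : E → F} (hf : ContDiff ℝ ∞ f)
    (hc : HasCompactSupport f) (N : ℕ) : ∃ B, ∀ k ≤ N, ∀ y, ‖iteratedFDeriv ℝ k f y‖ ≤ B :=
  exists_forall_le_of_forall_exists_le (fun k ↦ (hc.iteratedFDeriv k).exists_bound_of_continuous
    (hf.continuous_iteratedFDeriv (mod_cast le_top))) N

lemma exists_norm_iteratedFDeriv_sum_smul_le {ι : Type*} (s : Finset ι) {f : ι → E → F}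
    (hf : ∀ i, ContDiff ℝ ∞ (f i)) (hc : ∀ i, HasCompactSupport (f i)) (N : ℕ) :
    ∃ A, ∀ a : ι → ℝ, (∀ i, |a i| ≤ 1) → ∀ k ≤ N, ∀ y,
      ‖iteratedFDeriv ℝ k (fun y ↦ ∑ i ∈ s, a i • f i y) y‖ ≤ A := by
  choose B hB using fun i ↦ exists_norm_iteratedFDeriv_le_of_hasCompactSupport (hf i) (hc i) N
  refine ⟨∑ i ∈ s, B i, fun a ha k hk y ↦ ?_⟩
  have hfk : ∀ i, ContDiff ℝ k (f i) := fun i ↦ (hf i).of_le (mod_cast le_top)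
  have hfk_smul : ∀ i ∈ s, ContDiffAt ℝ k (fun y ↦ a i • f i y) y :=
    fun i _ ↦ (contDiff_const.smul (hfk i)).contDiffAt
  rw [iteratedFDeriv_fun_sum_apply hfk_smul]
  refine norm_sum_le_of_le s fun i _ ↦ ?_
  rw [iteratedFDeriv_const_smul_apply' (hfk i).contDiffAt, norm_smul]
  exact (mul_le_of_le_one_left (norm_nonneg _) (ha i)).trans (hB i k hk y)

lemma exists_norm_iteratedFDeriv_comp_le {t : Set F} (ht : IsCompact t) (htd : UniqueDiffOn ℝ t)
    {g : F → G} (hg : ContDiffOn ℝ ∞ g t) (A : ℝ) (N : ℕ) :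
    ∃ C, ∀ f : E → F, ContDiff ℝ ∞ f → Set.range f ⊆ t →
      (∀ k ≤ N, ∀ y, ‖iteratedFDeriv ℝ k f y‖ ≤ A) →
      ∀ k ≤ N, ∀ y, ‖iteratedFDeriv ℝ k (g ∘ f) y‖ ≤ C := by
  obtain ⟨D, hD⟩ := exists_forall_le_of_forall_exists_le
    (f := fun k (y : t) ↦ ‖iteratedFDerivWithin ℝ k g t y‖) (fun k ↦ by
      simpa using ht.exists_bound_of_continuousOn
        (hg.continuousOn_iteratedFDerivWithin (mod_cast le_top) htd)) N
  obtain ⟨C, hC⟩ := ((range (N + 1)).image fun k ↦ k.factorial * D * max 1 A ^ k).exists_le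
  refine ⟨C, fun f hf hft hA k hk y ↦ ?_⟩
  have hcomp := norm_iteratedFDeriv_comp_le' hft htd hg hf (mod_cast le_top : (k : ℕ∞ω) ≤ ∞) y
    (fun i hi ↦ hD i (hi.trans hk) ⟨f y, hft ⟨y, rfl⟩⟩)
    (fun i hi hik ↦ (hA i (hik.trans hk) y).trans <|
      (le_max_right 1 A).trans (le_self_pow₀ (le_max_left 1 A) (by omega)))
  exact hcomp.trans (hC _ (mem_image_of_mem _ (mem_range_succ_iff.2 hk)))

end CompactBounds

lemma contDiffOn_sqrt_one_sub_sq {r : ℝ} (hr : r < 1) :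
    ContDiffOn ℝ ∞ (fun t : ℝ ↦ √(1 - t ^ 2)) (Set.Icc (-r) r) := by
  refine ContDiffOn.sqrt (by fun_prop) fun t ht ↦ ?_
  have hsq : t ^ 2 < 1 := (sq_lt_one_iff_abs_lt_one t).2 ((abs_le.2 ht).trans_lt hr)
  exact (sub_pos.2 hsq).ne'

section MultiIndexDerivatives

variable {n : ℕ} {α : Fin n → ℕ} {F G : Euc n → ℝ}

lemma deg_eq_degree (s : Fin n →₀ ℕ) : deg s = s.degree := by
  simp [deg, Finsupp.degree_eq_sum]

/-- The list of directions, with multiplicity, in which `mD α` differentiates; the outermost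
derivative comes first. -/
def idxList (α : Fin n → ℕ) : List (Fin n) :=
  (List.finRange n).flatMap fun i ↦ List.replicate (α i) i

lemma length_idxList (α : Fin n → ℕ) : (idxList α).length = deg α := by
  simp [idxList, deg, List.length_flatMap, List.sum_ofFn, ← List.ofFn_eq_map]

lemma count_idxList (α : Fin n → ℕ) (i : Fin n) : (idxList α).count i = α i := by
  simp [idxList, List.count_flatMap, List.count_replicate, List.sum_ofFn, ← List.ofFn_eq_map]

lemma foldr_pD_eq_iteratedFDeriv (l : List (Fin n)) (hF : ContDiff ℝ l.length F) :
    l.foldr pD F = fun y ↦ iteratedFDeriv ℝ l.length F y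
      fun j ↦ EuclideanSpace.single (l.get j) (1 : ℝ) := by
  induction l with
  | nil => rfl
  | cons i l ih =>
    rw [List.length_cons] at hF
    rw [List.foldr_cons, ih (hF.of_le (mod_cast Nat.le_succ _))]
    ext y
    have hd : DifferentiableAt ℝ (iteratedFDeriv ℝ l.length F) y :=
      (hF.differentiable_iteratedFDeriv (mod_cast Nat.lt_succ_self _)) y
    exact DFunLike.congr_fun (hd.hasFDerivAt.continuousMultilinear_apply_const _).fderiv _

lemma exists_mD_apply_eq_iteratedFDeriv (α : Fin n → ℕ) :
    ∃ v : Fin (deg α) → Euc n, (∀ j, ‖v j‖ = 1) ∧ ∀ F, ContDiff ℝ (deg α) F →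
      ∀ y, mD α F y = iteratedFDeriv ℝ (deg α) F y v := by
  rw [← length_idxList α]
  exact ⟨fun j ↦ EuclideanSpace.single ((idxList α).get j) 1, by simp,
    fun F hF ↦ congr_fun (foldr_pD_eq_iteratedFDeriv (idxList α) hF)⟩

lemma abs_mD_le_norm_iteratedFDeriv (hF : ContDiff ℝ (deg α) F) (y : Euc n) :
    |mD α F y| ≤ ‖iteratedFDeriv ℝ (deg α) F y‖ := by
  obtain ⟨v, hv, hα⟩ := exists_mD_apply_eq_iteratedFDeriv α
  rw [hα F hF]
  simpa [hv] using (iteratedFDeriv ℝ (deg α) F y).le_opNorm v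

lemma mD_sub (hF : ContDiff ℝ (deg α) F) (hG : ContDiff ℝ (deg α) G) (y : Euc n) :
    mD α (fun y ↦ F y - G y) y = mD α F y - mD α G y := by
  obtain ⟨v, -, hα⟩ := exists_mD_apply_eq_iteratedFDeriv α
  rw [hα _ (hF.sub hG), hα F hF, hα G hG,
    fun_iteratedFDeriv_sub_apply hF.contDiffAt hG.contDiffAt]
  rfl

lemma mD_comp_smul_add (hF : ContDiff ℝ (deg α) F) (c : ℝ) (b y : Euc n) :
    mD α (fun y ↦ F (c • y + b)) y = c ^ deg α * mD α F (c • y + b) := by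
  obtain ⟨v, -, hα⟩ := exists_mD_apply_eq_iteratedFDeriv α
  have hFb : ContDiff ℝ (deg α) fun y ↦ F (y + b) := hF.comp (contDiff_id.add contDiff_const)
  have hFcb : ContDiff ℝ (deg α) fun y ↦ F (c • y + b) := hFb.comp (contDiff_const_smul c)
  simp [hα _ hFcb, hα F hF, iteratedFDeriv_comp_const_smul c hFb, iteratedFDeriv_comp_add_right]

end MultiIndexDerivatives

lemma totalDegree_aeval_le {σ τ R : Type*} [CommSemiring R] {f : σ → MvPolynomial τ R}
    (hf : ∀ i, (f i).totalDegree ≤ 1) (P : MvPolynomial σ R) :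
    (MvPolynomial.aeval f P).totalDegree ≤ P.totalDegree := by
  rw [MvPolynomial.aeval_def, MvPolynomial.eval₂_eq]
  refine MvPolynomial.totalDegree_finsetSum_le fun s hs ↦ ?_
  calc _ ≤ 0 + ∑ i ∈ s.support, s i * 1 := by
        refine (MvPolynomial.totalDegree_mul _ _).trans (add_le_add ?_ ?_)
        · exact (MvPolynomial.totalDegree_C _).le
        · exact (MvPolynomial.totalDegree_finsetProd _ _).trans (sum_le_sum fun i _ ↦
            (MvPolynomial.totalDegree_pow _ _).trans (Nat.mul_le_mul_left _ (hf i)))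
    _ = s.sum fun _ e ↦ e := by simp [Finsupp.sum]
    _ ≤ P.totalDegree := MvPolynomial.le_totalDegree hs

section PolynomialFunctions

variable {n : ℕ}

lemma contDiff_peval (P : MPoly n) : ContDiff ℝ ∞ (peval P) := by
  unfold peval
  simp only [MvPolynomial.eval_eq']
  fun_prop

lemma differentiable_peval (P : MPoly n) : Differentiable ℝ (peval P) :=
  (contDiff_peval P).differentiable (by simp)

lemma pD_peval (i : Fin n) (P : MPoly n) :
    pD i (peval P) = peval (MvPolynomial.pderiv i P) := by
  ext y
  induction P using MvPolynomial.induction_on with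
  | C a =>
    have hC : peval (MvPolynomial.C a : MPoly n) = fun _ ↦ a := by ext; simp [peval]
    simp [hC, pD, peval]
  | add p q hp hq =>
    have hadd : peval (p + q) = fun y ↦ peval p y + peval q y := by ext; simp [peval]
    simp only [pD, hadd, fderiv_fun_add (differentiable_peval p y) (differentiable_peval q y)] at *
    simp [hp, hq, peval]
  | mul_X p j hp =>
    have hmul : peval (p * MvPolynomial.X j) = fun y ↦ peval p y * y j := by ext; simp [peval]
    have hj : HasFDerivAt (fun y : Euc n ↦ y j) (EuclideanSpace.proj j : Euc n →L[ℝ] ℝ) y :=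
      (EuclideanSpace.proj j : Euc n →L[ℝ] ℝ).hasFDerivAt
    have hproj : (EuclideanSpace.proj j : Euc n →L[ℝ] ℝ) (EuclideanSpace.single i 1) =
        peval (MvPolynomial.pderiv i (MvPolynomial.X j)) y := by
      by_cases hij : j = i <;> simp [hij, peval]
    simp only [pD, hmul, fderiv_fun_mul (differentiable_peval p y) hj.differentiableAt,
      hj.fderiv] at *
    simp [hp, hproj, peval, Derivation.leibniz]

lemma foldr_pD_peval (l : List (Fin n)) (P : MPoly n) :
    l.foldr pD (peval P) = peval (l.foldr (fun i ↦ MvPolynomial.pderiv i) P) := by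
  induction l with
  | nil => rfl
  | cons i l ih => rw [List.foldr_cons, ih, pD_peval]; rfl

lemma abs_coeff_add_toFinsupp_le (l : List (Fin n)) (P : MPoly n) (s : Fin n →₀ ℕ) :
    |P.coeff (s + Multiset.toFinsupp (l : Multiset (Fin n)))| ≤
      |(l.foldr (fun i ↦ MvPolynomial.pderiv i) P).coeff s| := by
  induction l generalizing s with
  | nil => simp
  | cons i l ih =>
    rw [List.foldr_cons, MvPolynomial.coeff_pderiv, abs_mul, ← Multiset.cons_coe,
      ← Multiset.singleton_add, Multiset.toFinsupp_add, Multiset.toFinsupp_singleton, ← add_assoc]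
    refine (ih _).trans (le_mul_of_one_le_right (abs_nonneg _) ?_)
    have hs : (0 : ℝ) ≤ s i := Nat.cast_nonneg _
    exact (le_add_of_nonneg_left hs).trans (le_abs_self _)

lemma abs_coeff_le_abs_mD_peval_zero (P : MPoly n) (s : Fin n →₀ ℕ) :
    |P.coeff s| ≤ |mD s (peval P) 0| := by
  have hs : Multiset.toFinsupp (idxList s : Multiset (Fin n)) = s := by
    ext i
    simp [Multiset.toFinsupp_apply, count_idxList]
  have hcoeff := abs_coeff_add_toFinsupp_le (idxList s) P 0
  rw [hs, zero_add] at hcoeff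
  refine hcoeff.trans_eq (congrArg _ ?_)
  change _ = (idxList s).foldr pD (peval P) 0
  simp [foldr_pD_peval, peval, MvPolynomial.constantCoeff_eq]

lemma peval_aeval (f : Fin n → MPoly n) (P : MPoly n) (y : Euc n) :
    peval (MvPolynomial.aeval f P) y = MvPolynomial.eval (fun i ↦ peval (f i) y) P := by
  have hC : (MvPolynomial.eval y).comp (algebraMap ℝ (MPoly n)) = RingHom.id ℝ := by ext; simp
  rw [peval, MvPolynomial.map_aeval, hC]
  rfl

/-- The polynomial `u ↦ Q (δ u + x)`, which is `Q` seen from `x` at the length scale `δ`. -/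
def rescale (x : Euc n) (δ : ℝ) (Q : MPoly n) : MPoly n :=
  MvPolynomial.aeval (fun i ↦ MvPolynomial.C δ * MvPolynomial.X i + MvPolynomial.C (x i)) Q

lemma peval_rescale (x : Euc n) (δ : ℝ) (Q : MPoly n) (u : Euc n) :
    peval (rescale x δ Q) u = peval Q (δ • u + x) := by
  rw [rescale, peval_aeval]
  simp [peval]

lemma totalDegree_rescale_le (x : Euc n) (δ : ℝ) (Q : MPoly n) :
    (rescale x δ Q).totalDegree ≤ Q.totalDegree := by
  refine totalDegree_aeval_le (fun i ↦ (MvPolynomial.totalDegree_add _ _).trans ?_) Q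
  have hX : (MvPolynomial.C δ * MvPolynomial.X i : MPoly n).totalDegree ≤ 1 :=
    (MvPolynomial.totalDegree_mul _ _).trans (by simp)
  simpa using hX

lemma abs_coeff_rescale_le_one {x : Euc n} {δ : ℝ} (hδ : 0 < δ) {Q : MPoly n} {d : ℕ}
    (hQd : Q.totalDegree ≤ d)
    (hQ : ∀ β : Fin n → ℕ, deg β ≤ d → |mD β (peval Q) x| ≤ δ ^ (-(deg β : ℤ)))
    (s : Fin n →₀ ℕ) : |(rescale x δ Q).coeff s| ≤ 1 := by
  by_cases hs : deg s ≤ d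
  · have hmD : mD s (peval (rescale x δ Q)) 0 = δ ^ deg s * mD s (peval Q) x := by
      have := mD_comp_smul_add (α := s) (F := peval Q) ((contDiff_peval Q).of_le (mod_cast le_top))
        δ x 0
      simpa [← peval_rescale] using this
    calc |(rescale x δ Q).coeff s| ≤ |mD s (peval (rescale x δ Q)) 0| :=
          abs_coeff_le_abs_mD_peval_zero _ s
      _ = δ ^ deg s * |mD s (peval Q) x| := by rw [hmD, abs_mul, abs_of_pos (by positivity)]
      _ ≤ δ ^ deg s * δ ^ (-(deg s : ℤ)) := by gcongr; exact hQ s hs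
      _ = 1 := by rw [zpow_neg, zpow_natCast]; exact mul_inv_cancel₀ (by positivity)
  · rw [MvPolynomial.coeff_eq_zero_of_totalDegree_lt, abs_zero]
    · exact zero_le_one
    · rw [deg_eq_degree] at hs
      exact ((totalDegree_rescale_le x δ Q).trans hQd).trans_lt (not_le.1 hs)

lemma vanishesToOrder_peval_sub {P : MPoly n} {k : ℕ} (hP : ∀ s ∈ P.support, k ≤ s.degree)
    (x : Euc n) : VanishesToOrder k (fun y ↦ peval P (y - x)) x := by
  have hcoord (i : Fin n) : VanishesToOrder 1 (fun y : Euc n ↦ (y - x) i) x :=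
    .of_apply_eq_zero (by fun_prop) (by simp)
  simp only [peval, MvPolynomial.eval_eq']
  refine .sum fun s hs ↦ ?_
  have hmonomial := VanishesToOrder.prod (s := univ) fun i _ ↦ (hcoord i).pow (s i)
  have hcoeff : VanishesToOrder 0 (fun _ : Euc n ↦ P.coeff s) x :=
    .of_contDiffAt contDiffAt_const
  exact (hcoeff.mul hmonomial).mono (by simpa [Finsupp.degree_eq_sum] using hP s hs)

lemma coeff_truncLE (d : ℕ) (P : MPoly n) (s : Fin n →₀ ℕ) :
    (truncLE d P).coeff s = if s.degree ≤ d then P.coeff s else 0 := by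
  simp only [truncLE, MvPolynomial.coeff_sum, MvPolynomial.coeff_monomial, sum_ite_eq', mem_filter,
    MvPolynomial.mem_support_iff, Finsupp.degree_apply, Finsupp.sum]
  grind

lemma peval_polyShift (v : Fin n → ℝ) (P : MPoly n) (y : Euc n) :
    peval (polyShift v P) y = MvPolynomial.eval (fun i ↦ y i + v i) P := by
  rw [polyShift, peval_aeval]
  simp [peval]

lemma vanishesToOrder_peval_sub_peval_jetTrunc (m : ℕ) (x : Euc n) (P : MPoly n) :
    VanishesToOrder m (fun y ↦ peval P y - peval (jetTrunc m n x P) y) x := by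
  set S := polyShift x P with hS
  have hsupp : ∀ s ∈ (S - truncLE (m - 1) S).support, m ≤ s.degree := by
    intro s hs
    by_contra! hsm
    have : s.degree ≤ m - 1 := by omega
    simp [coeff_truncLE, this] at hs
  convert vanishesToOrder_peval_sub hsupp x using 2 with y
  have hsub : peval (S - truncLE (m - 1) S) (y - x) =
      peval S (y - x) - peval (truncLE (m - 1) S) (y - x) := by simp [peval]
  rw [hsub, jetTrunc, peval_polyShift, hS, peval_polyShift]
  simp [peval, sub_eq_add_neg]

/-- The multi-indices of degree at most `d` in `n` variables. -/
def multiIndices (n d : ℕ) : Finset (Fin n →₀ ℕ) :=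
  (Finsupp.finite_of_degree_le d).toFinset

/-- The polynomials of degree at most `d` with coefficients in `[-1, 1]`. -/
def unitPolys (n d : ℕ) : Set (MPoly n) :=
  {P | P.totalDegree ≤ d ∧ ∀ s, |P.coeff s| ≤ 1}

lemma peval_eq_sum_multiIndices {P : MPoly n} {d : ℕ} (hP : P.totalDegree ≤ d) (u : Euc n) :
    peval P u = ∑ s ∈ multiIndices n d, P.coeff s * ∏ i, u i ^ s i := by
  rw [peval, MvPolynomial.eval_eq']
  refine sum_subset (fun s hs ↦ ?_) (fun s _ hs ↦ ?_)
  · rw [multiIndices, Set.Finite.mem_toFinset]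
    exact (MvPolynomial.le_totalDegree hs).trans hP
  · rw [MvPolynomial.notMem_support_iff.1 hs, zero_mul]

lemma abs_prod_pow_sub_prod_zero_pow_le (s : Fin n →₀ ℕ) {u : Euc n} (hu : ‖u‖ ≤ 1) :
    |∏ i, u i ^ s i - ∏ i, (0 : Euc n) i ^ s i| ≤ ‖u‖ := by
  have hle (i : Fin n) : |u i| ≤ ‖u‖ := PiLp.norm_apply_le u i
  obtain rfl | hs := eq_or_ne s 0
  · simp
  obtain ⟨i, hi⟩ := Finsupp.ne_iff.1 hs
  have hzero : ∏ i, (0 : Euc n) i ^ s i = 0 := prod_eq_zero (mem_univ i) (by simpa using hi)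
  rw [hzero, sub_zero, abs_prod, ← mul_prod_erase univ _ (mem_univ i)]
  have hi_le : |u i ^ s i| ≤ |u i| := by
    rw [abs_pow]
    exact pow_le_of_le_one (abs_nonneg _) ((hle i).trans hu) hi
  have hrest : ∏ j ∈ univ.erase i, |u j ^ s j| ≤ 1 := by
    refine prod_le_one (fun j _ ↦ abs_nonneg (u j ^ s j)) fun j _ ↦ ?_
    rw [abs_pow]
    exact pow_le_one₀ (abs_nonneg _) ((hle j).trans hu)
  exact (mul_le_of_le_one_right (abs_nonneg _) hrest).trans (hi_le.trans (hle i))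

lemma abs_peval_sub_peval_zero_le {P : MPoly n} {d : ℕ} (hP : P ∈ unitPolys n d) {u : Euc n}
    (hu : ‖u‖ ≤ 1) : |peval P u - peval P 0| ≤ #(multiIndices n d) * ‖u‖ := by
  rw [peval_eq_sum_multiIndices hP.1, peval_eq_sum_multiIndices hP.1, ← sum_sub_distrib,
    ← nsmul_eq_mul, ← sum_const]
  refine abs_sum_le_sum_abs _ _ |>.trans (sum_le_sum fun s _ ↦ ?_)
  rw [← mul_sub, abs_mul]
  exact (mul_le_of_le_one_left (abs_nonneg _) (hP.2 s)).trans
    (abs_prod_pow_sub_prod_zero_pow_le s hu)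

end PolynomialFunctions

section UnitScale

variable {n : ℕ}

/-- The function `θ₂` at unit scale: the polynomial `P` cut off by `χ`. -/
def cutoffPoly (χ : ContDiffBump (0 : Euc n)) (P : MPoly n) (u : Euc n) : ℝ :=
  χ u * peval P u

/-- The function `θ₁` at unit scale: the nonnegative solution of `θ₁² + (cutoffPoly χ P)² = 1`,
provided that `|cutoffPoly χ P| ≤ 1`. -/
def cutoffCopoly (χ : ContDiffBump (0 : Euc n)) (P : MPoly n) (u : Euc n) : ℝ :=
  √(1 - cutoffPoly χ P u ^ 2)

lemma contDiff_cutoffPoly (χ : ContDiffBump (0 : Euc n)) (P : MPoly n) :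
    ContDiff ℝ ∞ (cutoffPoly χ P) :=
  χ.contDiff.mul (contDiff_peval P)

lemma contDiff_cutoffCopoly {χ : ContDiffBump (0 : Euc n)} {P : MPoly n}
    (hP : ∀ u, |cutoffPoly χ P u| < 1) : ContDiff ℝ ∞ (cutoffCopoly χ P) :=
  (contDiff_const.sub ((contDiff_cutoffPoly χ P).pow 2)).sqrt fun u ↦
    (sub_pos.2 ((sq_lt_one_iff_abs_lt_one _).2 (hP u))).ne'

lemma cutoffCopoly_sq_add_cutoffPoly_sq {χ : ContDiffBump (0 : Euc n)} {P : MPoly n} {u : Euc n}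
    (hP : |cutoffPoly χ P u| ≤ 1) : cutoffCopoly χ P u ^ 2 + cutoffPoly χ P u ^ 2 = 1 := by
  rw [cutoffCopoly, Real.sq_sqrt (sub_nonneg.2 ((sq_le_one_iff_abs_le_one _).2 hP)),
    sub_add_cancel]

lemma exists_bump_abs_cutoffPoly_le (n d : ℕ) {ρ r : ℝ} (hρr : ρ < r) :
    ∃ χ : ContDiffBump (0 : Euc n), χ.rOut < 1 ∧ ∀ P ∈ unitPolys n d, |peval P 0| ≤ ρ →
      ∀ u, |cutoffPoly χ P u| ≤ r := by
  set M : ℕ := #(multiIndices n d)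
  set R : ℝ := min (1 / 2) ((r - ρ) / (M + 1))
  have hM : (0 : ℝ) < M + 1 := by positivity
  have hR : 0 < R := lt_min one_half_pos (div_pos (sub_pos.2 hρr) hM)
  have hR1 : R < 1 := (min_le_left _ _).trans_lt one_half_lt_one
  have hMR : (M + 1) * R ≤ r - ρ := (le_div_iff₀' hM).1 (min_le_right _ _)
  set χ : ContDiffBump (0 : Euc n) := ⟨R / 2, R, half_pos hR, half_lt_self hR⟩
  refine ⟨χ, hR1, fun P hP hP0 u ↦ ?_⟩
  rw [cutoffPoly, abs_mul, abs_of_nonneg χ.nonneg]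
  obtain hu | hu := lt_or_ge ‖u‖ R
  · calc χ u * |peval P u| ≤ 1 * |peval P u| := by gcongr; exact χ.le_one
      _ ≤ |peval P 0| + |peval P u - peval P 0| := by
        simpa using abs_add_le (peval P 0) (peval P u - peval P 0)
      _ ≤ ρ + M * ‖u‖ := add_le_add hP0 (abs_peval_sub_peval_zero_le hP (hu.trans hR1).le)
      _ ≤ ρ + M * R := by gcongr
      _ ≤ r := by linarith
  · rw [χ.zero_of_le_dist (by simpa using hu), zero_mul]
    exact (abs_nonneg _).trans (hP0.trans hρr.le)

lemma exists_norm_iteratedFDeriv_cutoffPoly_le (χ : ContDiffBump (0 : Euc n)) (d N : ℕ) :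
    ∃ A, ∀ P ∈ unitPolys n d, ∀ k ≤ N, ∀ u, ‖iteratedFDeriv ℝ k (cutoffPoly χ P) u‖ ≤ A := by
  obtain ⟨A, hA⟩ := exists_norm_iteratedFDeriv_sum_smul_le (multiIndices n d)
    (f := fun s (u : Euc n) ↦ χ u * ∏ i, u i ^ s i) (fun s ↦ χ.contDiff.mul (by fun_prop))
    (fun s ↦ χ.hasCompactSupport.mul_right) N
  refine ⟨A, fun P hP ↦ ?_⟩
  have hsum : cutoffPoly χ P =
      fun u ↦ ∑ s ∈ multiIndices n d, P.coeff s • (χ u * ∏ i, u i ^ s i) := by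
    ext u
    rw [cutoffPoly, peval_eq_sum_multiIndices hP.1, mul_sum]
    exact sum_congr rfl fun s _ ↦ mul_left_comm _ _ _
  rw [hsum]
  exact hA P.coeff hP.2

lemma exists_bump_norm_iteratedFDeriv_le (n d N : ℕ) {ρ : ℝ} (hρ : ρ < 1) :
    ∃ (χ : ContDiffBump (0 : Euc n)) (C : ℝ), χ.rOut < 1 ∧ 0 < C ∧
      ∀ P ∈ unitPolys n d, |peval P 0| ≤ ρ → (∀ u, |cutoffPoly χ P u| < 1) ∧
        ∀ k ≤ N, ∀ u, ‖iteratedFDeriv ℝ k (cutoffCopoly χ P) u‖ ≤ C ∧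
          ‖iteratedFDeriv ℝ k (cutoffPoly χ P) u‖ ≤ C := by
  obtain ⟨r, hr, hr1⟩ := exists_between (max_lt hρ zero_lt_one)
  obtain ⟨hρr, hr0⟩ := max_lt_iff.1 hr
  obtain ⟨χ, hχ, hχr⟩ := exists_bump_abs_cutoffPoly_le n d hρr
  obtain ⟨A, hA⟩ := exists_norm_iteratedFDeriv_cutoffPoly_le χ d N
  obtain ⟨B, hB⟩ := exists_norm_iteratedFDeriv_comp_le (E := Euc n) isCompact_Icc
    (uniqueDiffOn_Icc (neg_lt_self hr0)) (contDiffOn_sqrt_one_sub_sq hr1) A N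
  refine ⟨χ, max 1 (max B A), hχ, zero_lt_one.trans_le (le_max_left _ _), fun P hP hP0 ↦
    ⟨fun u ↦ (hχr P hP hP0 u).trans_lt hr1, fun k hk u ↦ ⟨?_, ?_⟩⟩⟩
  · have hrange : Set.range (cutoffPoly χ P) ⊆ Set.Icc (-r) r :=
      Set.range_subset_iff.2 fun u ↦ abs_le.1 (hχr P hP hP0 u)
    exact (hB _ (contDiff_cutoffPoly χ P) hrange (hA P hP) k hk u).trans (by simp)
  · exact (hA P hP k hk u).trans (by simp)

end UnitScale

section Jets

variable {m n : ℕ} {x : Euc n}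

lemma isJetAt_of_vanishesToOrder (hm : 0 < m) {F : Euc n → ℝ} (hF : ContDiff ℝ ∞ F) {P : MPoly n}
    (hP : P.totalDegree ≤ m - 1) (hFP : VanishesToOrder m (fun y ↦ F y - peval P y) x) :
    IsJetAt m n F x P := by
  refine ⟨hP, fun α hα ↦ ?_⟩
  have hFα : ContDiff ℝ (deg α) F := hF.of_le (mod_cast le_top)
  have hPα : ContDiff ℝ (deg α) (peval P) := (contDiff_peval P).of_le (mod_cast le_top)
  have hzero : |mD α (fun y ↦ F y - peval P y) x| ≤ 0 := by
    simpa [hFP.iteratedFDeriv_eq_zero (deg α) (by omega)] using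
      abs_mD_le_norm_iteratedFDeriv (hFα.sub hPα) x
  rw [abs_nonpos_iff, mD_sub hFα hPα, sub_eq_zero] at hzero
  exact hzero.symm

lemma vanishesToOrder_sq_add_sq_sub_one {P Q : MPoly n}
    (hPQ : jmul m n x P P + jmul m n x Q Q = 1) :
    VanishesToOrder m (fun y ↦ peval P y ^ 2 + peval Q y ^ 2 - 1) x := by
  have hadd := (vanishesToOrder_peval_sub_peval_jetTrunc m x (P * P)).add
    (vanishesToOrder_peval_sub_peval_jetTrunc m x (Q * Q))
  convert hadd using 2 with y
  have hone : peval (jetTrunc m n x (P * P)) y + peval (jetTrunc m n x (Q * Q)) y = 1 := by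
    simpa [peval, jmul] using congrArg (peval · y) hPQ
  have hsq (R : MPoly n) : peval (R * R) y = peval R y ^ 2 := by simp [peval, sq]
  rw [hsq, hsq]
  linear_combination hone

end Jets

section Rescaling

variable {n : ℕ} {x : Euc n} {δ : ℝ}

/-- The function `F` transplanted from the origin at unit scale to `x` at scale `δ`. -/
def unscale (x : Euc n) (δ : ℝ) (F : Euc n → ℝ) (y : Euc n) : ℝ :=
  F (δ⁻¹ • (y - x))

lemma contDiff_unscale {F : Euc n → ℝ} (hF : ContDiff ℝ ∞ F) : ContDiff ℝ ∞ (unscale x δ F) :=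
  hF.comp ((contDiff_id.sub contDiff_const).const_smul δ⁻¹)

lemma abs_mD_unscale_le (hδ : 0 < δ) {F : Euc n → ℝ} (hF : ContDiff ℝ ∞ F) {α : Fin n → ℕ} {C : ℝ}
    (hC : ∀ u, ‖iteratedFDeriv ℝ (deg α) F u‖ ≤ C) (y : Euc n) :
    |mD α (unscale x δ F) y| ≤ C * δ ^ (-(deg α : ℤ)) := by
  have hFα : ContDiff ℝ (deg α) F := hF.of_le (mod_cast le_top)
  have hshift : unscale x δ F = fun y ↦ F (δ⁻¹ • y + -(δ⁻¹ • x)) := by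
    ext y
    rw [unscale, smul_sub, sub_eq_add_neg]
  rw [hshift, mD_comp_smul_add hFα, abs_mul, abs_of_pos (by positivity), zpow_neg, zpow_natCast,
    inv_pow, mul_comm]
  gcongr
  exact (abs_mD_le_norm_iteratedFDeriv hFα _).trans (hC _)

lemma unscale_cutoffPoly_rescale_eventuallyEq (hδ : δ ≠ 0) (χ : ContDiffBump (0 : Euc n))
    (Q : MPoly n) : unscale x δ (cutoffPoly χ (rescale x δ Q)) =ᶠ[𝓝 x] peval Q := by
  have htendsto : Tendsto (fun y ↦ δ⁻¹ • (y - x)) (𝓝 x) (𝓝 0) := by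
    have : Continuous fun y ↦ δ⁻¹ • (y - x) := by fun_prop
    simpa using this.tendsto x
  filter_upwards [htendsto.eventually χ.eventuallyEq_one] with y hy
  simp [unscale, cutoffPoly, hy, peval_rescale, smul_inv_smul₀ hδ]

lemma unscale_cutoffPoly_eq_zero (hδ : 0 < δ) {χ : ContDiffBump (0 : Euc n)} {y : Euc n}
    (hy : y ∉ Metric.ball x (χ.rOut * δ)) (P : MPoly n) : unscale x δ (cutoffPoly χ P) y = 0 := by
  have hdist : χ.rOut ≤ dist (δ⁻¹ • (y - x)) 0 := by
    rw [dist_zero_right, norm_smul, norm_inv, Real.norm_of_nonneg hδ.le, ← dist_eq_norm,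
      le_inv_mul_iff₀' hδ]
    exact not_lt.1 hy
  rw [unscale, cutoffPoly, χ.zero_of_le_dist hdist, zero_mul]

lemma isJetAt_unscale_cutoffPoly {m : ℕ} (hm : 0 < m) (hδ : δ ≠ 0) (χ : ContDiffBump (0 : Euc n))
    {Q : MPoly n} (hQ : Q.totalDegree ≤ m - 1) :
    IsJetAt m n (unscale x δ (cutoffPoly χ (rescale x δ Q))) x Q := by
  refine isJetAt_of_vanishesToOrder hm (contDiff_unscale (contDiff_cutoffPoly χ _)) hQ
    (VanishesToOrder.zero.congr ?_)
  filter_upwards [unscale_cutoffPoly_rescale_eventuallyEq hδ χ Q] with y hy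
  rw [hy, sub_self]

lemma isJetAt_unscale_cutoffCopoly {m : ℕ} (hm : 0 < m) (hδ : δ ≠ 0)
    {χ : ContDiffBump (0 : Euc n)} {Q₁ Q₂ : MPoly n} (hQ₁ : Q₁.totalDegree ≤ m - 1)
    (hQ : jmul m n x Q₁ Q₁ + jmul m n x Q₂ Q₂ = 1) (hQ₁x : 0 < peval Q₁ x)
    (hlt : ∀ u, |cutoffPoly χ (rescale x δ Q₂) u| < 1) :
    IsJetAt m n (unscale x δ (cutoffCopoly χ (rescale x δ Q₂))) x Q₁ := by
  refine isJetAt_of_vanishesToOrder hm (contDiff_unscale (contDiff_cutoffCopoly hlt)) hQ₁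
    (VanishesToOrder.sqrt_one_sub_sq_sub ?_ (contDiff_peval Q₁).contDiffAt
      (contDiff_unscale (contDiff_cutoffPoly χ _)).contDiffAt hQ₁x (hlt _))
  refine (vanishesToOrder_sq_add_sq_sub_one hQ).congr ?_
  filter_upwards [unscale_cutoffPoly_rescale_eventuallyEq hδ χ Q₂] with y hy
  rw [← hy]
  rfl

end Rescaling

lemma abs_peval_le_of_jmul_add_jmul_eq_one {m n : ℕ} (hm : 0 < m) {x : Euc n} {Q₁ Q₂ : MPoly n}
    (hQ : jmul m n x Q₁ Q₁ + jmul m n x Q₂ Q₂ = 1) {κ : ℝ} (hκ : 0 ≤ κ) (hQ₁ : κ ≤ peval Q₁ x) :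
    |peval Q₂ x| ≤ √(1 - κ ^ 2) := by
  have hsq : peval Q₁ x ^ 2 + peval Q₂ x ^ 2 - 1 = 0 :=
    (vanishesToOrder_sq_add_sq_sub_one hQ).apply_eq_zero hm
  have hκsq : κ ^ 2 ≤ peval Q₁ x ^ 2 := by gcongr
  exact Real.abs_le_sqrt (by linarith)

theorem theta_partition_exists_general (m n N : ℕ) (hm : 0 < m) {κ : ℝ} (hκ : 0 < κ) :
    ∃ c₀ C : ℝ, 0 < c₀ ∧ c₀ < 1 ∧ 0 < C ∧
      ∀ δ : ℝ, 0 < δ → ∀ x : Euc n, ∀ Q₁ Q₂ : MPoly n,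
        Q₁.totalDegree ≤ m - 1 → Q₂.totalDegree ≤ m - 1 →
        (∀ β : Fin n → ℕ, deg β ≤ m - 1 → |mD β (peval Q₂) x| ≤ δ ^ (-(deg β : ℤ))) →
        jmul m n x Q₁ Q₁ + jmul m n x Q₂ Q₂ = 1 →
        κ ≤ peval Q₁ x →
        ∃ θ₁ θ₂ : Euc n → ℝ,
          ContDiff ℝ ∞ θ₁ ∧ ContDiff ℝ ∞ θ₂ ∧
          (∀ β : Fin n → ℕ, deg β ≤ N → ∀ y : Euc n,
            |mD β θ₁ y| ≤ C * δ ^ (-(deg β : ℤ)) ∧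
            |mD β θ₂ y| ≤ C * δ ^ (-(deg β : ℤ))) ∧
          (∀ y : Euc n, θ₁ y ^ 2 + θ₂ y ^ 2 = 1) ∧
          IsJetAt m n θ₁ x Q₁ ∧ IsJetAt m n θ₂ x Q₂ ∧
          (∀ y : Euc n, y ∉ Metric.ball x (c₀ * δ) → θ₁ y = 1 ∧ θ₂ y = 0) := by
  have hρ : √(1 - κ ^ 2) < 1 := by
    rw [Real.sqrt_lt' one_pos, one_pow]
    exact sub_lt_self 1 (pow_pos hκ 2)
  obtain ⟨χ, C, hχ, hC, hbound⟩ := exists_bump_norm_iteratedFDeriv_le n (m - 1) N hρ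
  refine ⟨χ.rOut, C, χ.rOut_pos, hχ, hC, fun δ hδ x Q₁ Q₂ hQ₁ hQ₂ hmD hjmul hκQ₁ ↦ ?_⟩
  set P := rescale x δ Q₂
  have hP : P ∈ unitPolys n (m - 1) :=
    ⟨(totalDegree_rescale_le x δ Q₂).trans hQ₂, abs_coeff_rescale_le_one hδ hQ₂ hmD⟩
  have hP0 : |peval P 0| ≤ √(1 - κ ^ 2) := by
    simpa [P, peval_rescale] using abs_peval_le_of_jmul_add_jmul_eq_one hm hjmul hκ.le hκQ₁
  obtain ⟨hlt, hder⟩ := hbound P hP hP0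
  have h₁ : ContDiff ℝ ∞ (cutoffCopoly χ P) := contDiff_cutoffCopoly hlt
  have h₂ : ContDiff ℝ ∞ (cutoffPoly χ P) := contDiff_cutoffPoly χ P
  have hsq (u : Euc n) := cutoffCopoly_sq_add_cutoffPoly_sq (hlt u).le
  refine ⟨unscale x δ (cutoffCopoly χ P), unscale x δ (cutoffPoly χ P), contDiff_unscale h₁,
    contDiff_unscale h₂, fun β hβ y ↦ ?_, fun y ↦ hsq _,
    isJetAt_unscale_cutoffCopoly hm hδ.ne' hQ₁ hjmul (hκ.trans_le hκQ₁) hlt,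
    isJetAt_unscale_cutoffPoly hm hδ.ne' χ hQ₂, fun y hy ↦ ?_⟩
  · exact ⟨abs_mD_unscale_le hδ h₁ (fun u ↦ (hder _ hβ u).1) y,
      abs_mD_unscale_le hδ h₂ (fun u ↦ (hder _ hβ u).2) y⟩
  · have hy₂ := unscale_cutoffPoly_eq_zero hδ hy P
    exact ⟨by simpa [unscale, cutoffCopoly] using hy₂, hy₂⟩

end

/-- Construction of the partition-of-unity pair `θ₁, θ₂` ((2.19)–(2.22) in the proof of
Lemma 2.1). -/
theorem theta_partition_exists (m n : ℕ) (hm : 0 < m) (hn : 0 < n) :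
    ∃ c₀ C : ℝ, 0 < c₀ ∧ c₀ < 1 ∧ 0 < C ∧
      ∀ δ : ℝ, 0 < δ → δ ≤ 1 → ∀ x : Euc n, ∀ Q₁ Q₂ : MPoly n,
        MvPolynomial.totalDegree Q₁ ≤ m - 1 → MvPolynomial.totalDegree Q₂ ≤ m - 1 →
        (∀ β : Fin n → ℕ, deg β ≤ m - 1 →
          |mD β (peval Q₁) x| ≤ δ ^ (-(deg β : ℤ)) ∧
          |mD β (peval Q₂) x| ≤ δ ^ (-(deg β : ℤ))) →
        jmul m n x Q₁ Q₁ + jmul m n x Q₂ Q₂ = 1 →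
        1 / Real.sqrt 2 ≤ peval Q₁ x →
        ∃ θ₁ θ₂ : Euc n → ℝ,
          ContDiff ℝ (m : ℕ∞) θ₁ ∧ ContDiff ℝ (m : ℕ∞) θ₂ ∧
          (∀ β : Fin n → ℕ, deg β ≤ m → ∀ y : Euc n,
            |mD β θ₁ y| ≤ C * δ ^ (-(deg β : ℤ)) ∧
            |mD β θ₂ y| ≤ C * δ ^ (-(deg β : ℤ))) ∧
          (∀ y : Euc n, θ₁ y ^ 2 + θ₂ y ^ 2 = 1) ∧
          IsJetAt m n θ₁ x Q₁ ∧ IsJetAt m n θ₂ x Q₂ ∧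
          (∀ y : Euc n, y ∉ Metric.ball x (c₀ * δ) → θ₁ y = 1 ∧ θ₂ y = 0) := by
  have hκ : (0 : ℝ) < 1 / √2 := by positivity
  obtain ⟨c₀, C, hc₀, hc₀1, hC, hθ⟩ := theta_partition_exists_general m n m hm hκ
  refine ⟨c₀, C, hc₀, hc₀1, hC, fun δ hδ _ x Q₁ Q₂ hQ₁ hQ₂ hmD hjmul hQ₁x ↦ ?_⟩
  obtain ⟨θ₁, θ₂, hθ₁, hθ₂, h⟩ := hθ δ hδ x Q₁ Q₂ hQ₁ hQ₂ (fun β hβ ↦ (hmD β hβ).2) hjmul hQ₁x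
  exact ⟨θ₁, θ₂, hθ₁.of_le (mod_cast le_top), hθ₂.of_le (mod_cast le_top), h⟩

end
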